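/- Let K be a compact subset of a real Banach space X, let v_1, …, v_n ∈ K be linearly independent, set X_0 = {0} and X_k = span{v_1,…,v_k}, and let T : X_n → ℓ_2^n be any linear isomorphism. Then (∏_{k=1}^n dist(v_k, X_{k−1}))^{1/n} ≤ ‖T‖·‖T^{−1}‖ · (n! V_n)^{1/n} · ε_n(co(K)). -/

import Mathlib

open scoped RealInnerProductSpace

/-- Dyadic entropy number: infimum of all `ε > 0` such that `K` is covered by `2^n`
balls of radius `ε`. -/
noncomputable def entropyNumber {X : Type*} [NormedAddCommGroup X] (n : ℕ) (K : Set X) : ℝ :=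
  sInf {ε : ℝ | 0 < ε ∧ ∃ c : Fin (2 ^ n) → X, K ⊆ ⋃ i, Metric.closedBall (c i) ε}

/-- Symmetric (absolutely) convex hull: closure of the set of finite sums `∑ cᵢ gᵢ`
with `gᵢ ∈ K` and `∑ |cᵢ| ≤ 1`. -/
noncomputable def symConvexHull {X : Type*} [NormedAddCommGroup X] [NormedSpace ℝ X]
    (K : Set X) : Set X :=
  closure {x : X | ∃ (m : ℕ) (c : Fin m → ℝ) (g : Fin m → X),
    (∀ i, g i ∈ K) ∧ (∑ i, |c i|) ≤ 1 ∧ x = ∑ i, c i • g i}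

/-- Volume of the unit Euclidean ball in `ℝⁿ`. -/
noncomputable def unitBallVol (n : ℕ) : ℝ :=
  Real.pi ^ ((n : ℝ) / 2) / Real.Gamma ((n : ℝ) / 2 + 1)

/-- Span of the first `n` terms of a sequence. -/
noncomputable def spanFirst {X : Type*} [NormedAddCommGroup X] [NormedSpace ℝ X]
    (f : ℕ → X) (n : ℕ) : Submodule ℝ X :=
  Submodule.span ℝ (f '' {i | i < n})

/-- The weak greedy algorithm with parameter `γ`: `f n` (the `(n+1)`-st iterate) lies in `K`
and its distance to the span of the previous iterates is at least `γ` times that of any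
other element of `K`. -/
def IsWeakGreedy {X : Type*} [NormedAddCommGroup X] [NormedSpace ℝ X]
    (γ : ℝ) (K : Set X) (f : ℕ → X) : Prop :=
  ∀ n : ℕ, f n ∈ K ∧ ∀ g ∈ K,
    γ * Metric.infDist g (spanFirst f n : Set X) ≤ Metric.infDist (f n) (spanFirst f n : Set X)

/-- The greedy error `σ_n(K) = sup_{f ∈ K} dist(f, span{f_1,…,f_n})`. -/
noncomputable def greedyError {X : Type*} [NormedAddCommGroup X] [NormedSpace ℝ X]
    (K : Set X) (f : ℕ → X) (n : ℕ) : ℝ :=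
  sSup ((fun g => Metric.infDist g (spanFirst f n : Set X)) '' K)

/-- Kolmogorov `n`-width. -/
noncomputable def kolmogorovWidth {X : Type*} [NormedAddCommGroup X] [NormedSpace ℝ X]
    (n : ℕ) (K : Set X) : ℝ :=
  sInf {d : ℝ | ∃ Y : Submodule ℝ X, FiniteDimensional ℝ Y ∧ Module.finrank ℝ Y ≤ n ∧
    d = sSup ((fun g => Metric.infDist g (Y : Set X)) '' K)}

/-- `f` admits an `ℓ¹` representation over the dictionary `D`. -/
def HasL1Rep {X : Type*} [NormedAddCommGroup X] [NormedSpace ℝ X] (D : Set X) (f : X) : Prop :=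
  ∃ (c : ℕ → ℝ) (g : ℕ → X), (∀ i, g i ∈ D) ∧ Summable (fun i => |c i|) ∧
    HasSum (fun i => c i • g i) f

/-- The variation norm `‖f‖_{L₁(D)}`. -/
noncomputable def varNorm {X : Type*} [NormedAddCommGroup X] [NormedSpace ℝ X]
    (D : Set X) (f : X) : ℝ :=
  sInf {t : ℝ | ∃ (c : ℕ → ℝ) (g : ℕ → X), (∀ i, g i ∈ D) ∧ Summable (fun i => |c i|) ∧
    HasSum (fun i => c i • g i) f ∧ t = ∑' i, |c i|}

/-- The orthogonal greedy algorithm with target `f`: `fa 0 = 0`; at each step `g n ∈ D`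
maximizes `|⟨g, f - fa n⟩|` over `D`, and `fa (n+1)` is the orthogonal projection of `f`
onto `span{g 0, …, g n}`. -/
def IsOGA {X : Type*} [NormedAddCommGroup X] [InnerProductSpace ℝ X]
    (D : Set X) (f : X) (g fa : ℕ → X) : Prop :=
  fa 0 = 0 ∧ ∀ n : ℕ,
    g n ∈ D ∧ (∀ h ∈ D, |⟪h, f - fa n⟫| ≤ |⟪g n, f - fa n⟫|) ∧
    fa (n + 1) ∈ Submodule.span ℝ (g '' {i | i ≤ n}) ∧
    ∀ w ∈ Submodule.span ℝ (g '' {i | i ≤ n}), ⟪f - fa (n + 1), w⟫ = 0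

/-- Best `n`-term approximation error `E_n(f, D)`. -/
noncomputable def bestNTermError {X : Type*} [NormedAddCommGroup X] [NormedSpace ℝ X]
    (D : Set X) (n : ℕ) (f : X) : ℝ :=
  sInf {r : ℝ | ∃ (c : Fin n → ℝ) (g : Fin n → X), (∀ i, g i ∈ D) ∧ r = ‖f - ∑ i, c i • g i‖}

/-- The K-functional `K(t, g)` between `X` and `L₁(D)`. -/
noncomputable def Kfunctional {X : Type*} [NormedAddCommGroup X] [NormedSpace ℝ X]
    (D : Set X) (t : ℝ) (gg : X) : ℝ :=
  sInf {s : ℝ | ∃ h : X, HasL1Rep D h ∧ s = ‖gg - h‖ + t * varNorm D h}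

/-- The interpolation norm `‖g‖_θ = sup_{t > 0} t^{-θ} K(t, g)`. -/
noncomputable def interpNorm {X : Type*} [NormedAddCommGroup X] [NormedSpace ℝ X]
    (D : Set X) (θ : ℝ) (gg : X) : ℝ :=
  sSup ((fun t => t ^ (-θ) * Kfunctional D t gg) '' Set.Ioi (0 : ℝ))

/-!
Let `w k = T (v k)`. The Gram–Schmidt residual of `w k` is `T` of `v k` minus an element of
`X_{k-1}`, so `dist (v k, X_{k-1})` is at most `‖T⁻¹‖` times its norm; the product of these norms is
the volume of the parallelepiped on `w`, hence `n! / 2 ^ n` times that of the cross-polytope on `w`.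
This cross-polytope is covered by the `T`-images of the slices of the `2 ^ n` balls covering `co K`.
The balls need not be centred in the span of `v`, so a slice need not lie in a ball of radius `ε`
of the span; but its image has diameter at most `2 ‖T‖ ε`, and the isodiametric inequality, proved
by Steiner symmetrization, bounds its volume by that of a Euclidean ball of radius `‖T‖ ε`.
-/

open MeasureTheory Function Set

section Steiner

lemma volume_setOf_ofReal_two_mul_abs_lt (v : ENNReal) :
    volume {t : ℝ | ENNReal.ofReal (2 * |t|) < v} = v := by
  rcases eq_or_ne v ⊤ with rfl | hv
  · simp only [ENNReal.ofReal_lt_top, ofPred_true, Real.volume_univ]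
  · lift v to NNReal using hv
    have hball : {t : ℝ | ENNReal.ofReal (2 * |t|) < v} = Metric.ball 0 ((v : ℝ) / 2) := by
      ext t
      rw [mem_ofPred_eq, mem_ball_zero_iff, Real.norm_eq_abs,
        ENNReal.ofReal_lt_coe_iff (by positivity), lt_div_iff₀ two_pos, mul_comm]
    rw [hball, Real.volume_ball, mul_div_cancel₀ _ two_ne_zero, ENNReal.ofReal_coe_nnreal]

lemma dist_add_dist_le_of_dist_le {s s' t t' D : ℝ} (h : dist s t ≤ D) (h' : dist s t' ≤ D)
    (k : dist s' t ≤ D) (k' : dist s' t' ≤ D) : dist s s' + dist t t' ≤ 2 * D := by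
  simp only [Real.dist_eq, abs_le] at h h' k k' ⊢
  rcases abs_cases (s - s') with hs | hs <;> rcases abs_cases (t - t') with ht | ht <;> linarith

lemma volume_add_volume_le_of_dist_le {S T : Set ℝ} {D : ℝ} (hS : S.Nonempty) (hT : T.Nonempty)
    (h : ∀ s ∈ S, ∀ t ∈ T, dist s t ≤ D) :
    volume S + volume T ≤ ENNReal.ofReal (2 * D) := by
  have hpair : ∀ s ∈ S, ∀ s' ∈ S, ∀ t ∈ T, ∀ t' ∈ T, dist s s' + dist t t' ≤ 2 * D :=
    fun s hs s' hs' t ht t' ht' => dist_add_dist_le_of_dist_le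
      (h s hs t ht) (h s hs t' ht') (h s' hs' t ht) (h s' hs' t' ht')
  have hdiam : ∀ s ∈ S, ∀ s' ∈ S, edist s s' + Metric.ediam T ≤ ENNReal.ofReal (2 * D) := by
    intro s hs s' hs'
    obtain ⟨t₀, ht₀⟩ := hT
    have hss' : 0 ≤ 2 * D - dist s s' := by
      linarith [hpair s hs s' hs' t₀ ht₀ t₀ ht₀, dist_self t₀]
    have hTle : Metric.ediam T ≤ ENNReal.ofReal (2 * D - dist s s') :=
      Metric.ediam_le fun t ht t' ht' => by
        rw [edist_dist]
        exact ENNReal.ofReal_le_ofReal (by linarith [hpair s hs s' hs' t ht t' ht'])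
    calc edist s s' + Metric.ediam T
        ≤ ENNReal.ofReal (dist s s') + ENNReal.ofReal (2 * D - dist s s') := by
          rw [edist_dist]
          gcongr
      _ = ENNReal.ofReal (2 * D) := by
          rw [← ENNReal.ofReal_add dist_nonneg hss', add_sub_cancel]
  obtain ⟨s₀, hs₀⟩ := hS
  have hTle : Metric.ediam T ≤ ENNReal.ofReal (2 * D) := by simpa using hdiam s₀ hs₀ s₀ hs₀
  have hSle : Metric.ediam S ≤ ENNReal.ofReal (2 * D) - Metric.ediam T :=
    Metric.ediam_le fun s hs s' hs' => ENNReal.le_sub_of_add_le_right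
      (hTle.trans_lt ENNReal.ofReal_lt_top).ne (hdiam s hs s' hs')
  calc volume S + volume T ≤ Metric.ediam S + Metric.ediam T :=
        add_le_add (Real.volume_le_diam S) (Real.volume_le_diam T)
    _ ≤ ENNReal.ofReal (2 * D) - Metric.ediam T + Metric.ediam T := by gcongr
    _ = ENNReal.ofReal (2 * D) := tsub_add_cancel_of_le hTle

lemma exists_dist_lt_dist_of_lt_volume {S T : Set ℝ} {a b : ℝ}
    (ha : ENNReal.ofReal (2 * |a|) < volume S) (hb : ENNReal.ofReal (2 * |b|) < volume T) :
    ∃ s ∈ S, ∃ t ∈ T, dist a b < dist s t := by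
  by_contra! hST
  have hle := volume_add_volume_le_of_dist_le (nonempty_of_measure_ne_zero ha.ne_bot)
    (nonempty_of_measure_ne_zero hb.ne_bot) hST
  refine (ENNReal.add_lt_add ha hb).not_ge (hle.trans ?_)
  rw [← ENNReal.ofReal_add (by positivity) (by positivity), ← mul_add]
  exact ENNReal.ofReal_le_ofReal (mul_le_mul_of_nonneg_left (abs_sub a b) zero_le_two)

variable {ι : Type*} [DecidableEq ι]

/-- The reflection of `ι → ℝ` in the hyperplane `p i = 0`. -/
def reflectCoord (i : ι) (p : ι → ℝ) : ι → ℝ := update p i (-p i)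

/-- The Steiner symmetrization of a set of `ι → ℝ` in the direction of the `i`-th coordinate: every
section of `A` parallel to that direction is replaced by the open interval of the same length
centred on the hyperplane `p i = 0` (so empty and null sections both become empty). -/
def steinerSymm (i : ι) (A : Set (ι → ℝ)) : Set (ι → ℝ) :=
  {p | ENNReal.ofReal (2 * |p i|) < volume {t : ℝ | update p i t ∈ A}}

lemma mapsTo_reflectCoord_steinerSymm (i : ι) (A : Set (ι → ℝ)) :
    MapsTo (reflectCoord i) (steinerSymm i A) (steinerSymm i A) := by
  intro p hp
  simpa only [reflectCoord, steinerSymm, mem_ofPred_eq, update_self, update_idem, abs_neg] using hp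

lemma mapsTo_reflectCoord_steinerSymm_of_ne {i j : ι} (hij : j ≠ i) {A : Set (ι → ℝ)}
    (hA : MapsTo (reflectCoord j) A A) :
    MapsTo (reflectCoord j) (steinerSymm i A) (steinerSymm i A) := by
  intro p hp
  simp only [reflectCoord, steinerSymm, mem_ofPred_eq, update_of_ne hij.symm] at hp ⊢
  refine hp.trans_le (measure_mono fun t ht => ?_)
  have h := hA ht
  rwa [reflectCoord, update_of_ne hij, update_comm hij.symm] at h

lemma neg_mem_of_forall_mapsTo_reflectCoord [Finite ι] {A : Set (ι → ℝ)}
    (hA : ∀ i, MapsTo (reflectCoord i) A A) {p : ι → ℝ} (hp : p ∈ A) : -p ∈ A := by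
  cases nonempty_fintype ι
  have hpiecewise : ∀ s : Finset ι, s.piecewise (-p) p ∈ A := by
    intro s
    induction s using Finset.induction_on with
    | empty => rwa [Finset.piecewise_empty]
    | insert j s hj ih =>
      rw [Finset.piecewise_insert]
      simpa only [reflectCoord, Pi.neg_apply, Finset.piecewise_eq_of_notMem _ _ _ hj] using hA j ih
  simpa only [Finset.piecewise_univ] using hpiecewise Finset.univ

lemma lmarginal_singleton_indicator_one (i : ι) {A : Set (ι → ℝ)} (hA : MeasurableSet A)
    (p : ι → ℝ) :
    lmarginal (fun _ => volume) {i} (A.indicator 1) p = volume {t : ℝ | update p i t ∈ A} := by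
  rw [lmarginal_singleton]
  exact lintegral_indicator_one (measurable_update p hA)

lemma measurableSet_steinerSymm (i : ι) {A : Set (ι → ℝ)} (hA : MeasurableSet A) :
    MeasurableSet (steinerSymm i A) := by
  refine measurableSet_lt (by fun_prop) ?_
  simp_rw [← lmarginal_singleton_indicator_one i hA]
  exact (measurable_one.indicator hA).lmarginal _

variable [Fintype ι]

lemma volume_steinerSymm (i : ι) {A : Set (ι → ℝ)} (hA : MeasurableSet A) :
    volume (steinerSymm i A) = volume A := by
  have hB := measurableSet_steinerSymm i hA
  rw [← lintegral_indicator_one hA, ← lintegral_indicator_one hB]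
  refine lintegral_eq_of_lmarginal_eq {i} (measurable_one.indicator hB)
    (measurable_one.indicator hA) (funext fun p => ?_)
  rw [lmarginal_singleton_indicator_one i hA, lmarginal_singleton_indicator_one i hB]
  simp only [steinerSymm, mem_ofPred_eq, update_self, update_idem,
    volume_setOf_ofReal_two_mul_abs_lt]

lemma sum_sq_sub_le_of_mem_steinerSymm (i : ι) {A : Set (ι → ℝ)} {C : ℝ}
    (hA : ∀ p ∈ A, ∀ q ∈ A, ∑ k, (p k - q k) ^ 2 ≤ C) :
    ∀ p ∈ steinerSymm i A, ∀ q ∈ steinerSymm i A, ∑ k, (p k - q k) ^ 2 ≤ C := by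
  intro p hp q hq
  obtain ⟨s, hs, t, ht, hst⟩ := exists_dist_lt_dist_of_lt_volume hp hq
  refine (Finset.sum_le_sum fun k _ => ?_).trans (hA _ hs _ ht)
  rcases eq_or_ne k i with rfl | hk
  · simpa only [update_self] using sq_le_sq.2 hst.le
  · simp only [update_of_ne hk, le_refl]

lemma exists_measurableSet_forall_mapsTo_reflectCoord {A : Set (ι → ℝ)} (hA : MeasurableSet A)
    {C : ℝ} (hC : ∀ p ∈ A, ∀ q ∈ A, ∑ k, (p k - q k) ^ 2 ≤ C) (s : Finset ι) :
    ∃ B : Set (ι → ℝ), MeasurableSet B ∧ volume B = volume A ∧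
      (∀ p ∈ B, ∀ q ∈ B, ∑ k, (p k - q k) ^ 2 ≤ C) ∧ ∀ j ∈ s, MapsTo (reflectCoord j) B B := by
  induction s using Finset.induction_on with
  | empty => exact ⟨A, hA, rfl, hC, by simp⟩
  | insert i s his ih =>
    obtain ⟨B, hB, hBA, hBC, hBs⟩ := ih
    refine ⟨steinerSymm i B, measurableSet_steinerSymm i hB, (volume_steinerSymm i hB).trans hBA,
      sum_sq_sub_le_of_mem_steinerSymm i hBC, fun j hj => ?_⟩
    rcases Finset.mem_insert.1 hj with rfl | hj
    · exact mapsTo_reflectCoord_steinerSymm j B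
    · exact mapsTo_reflectCoord_steinerSymm_of_ne (ne_of_mem_of_not_mem hj his) (hBs j hj)

end Steiner

section Isodiametric

lemma volume_le_volume_setOf_sum_sq_le {ι : Type*} [Fintype ι] {A : Set (ι → ℝ)}
    (hA : MeasurableSet A) {r : ℝ} (h : ∀ p ∈ A, ∀ q ∈ A, ∑ k, (p k - q k) ^ 2 ≤ (2 * r) ^ 2) :
    volume A ≤ volume {p : ι → ℝ | ∑ k, p k ^ 2 ≤ r ^ 2} := by
  classical
  obtain ⟨B, -, hBA, hBr, hB⟩ := exists_measurableSet_forall_mapsTo_reflectCoord hA h Finset.univ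
  rw [← hBA]
  refine measure_mono fun p hp => ?_
  have hneg : -p ∈ B := neg_mem_of_forall_mapsTo_reflectCoord (fun i => hB i (Finset.mem_univ i)) hp
  have hdouble : ∑ k, (p k - (-p) k) ^ 2 = 4 * ∑ k, p k ^ 2 := by
    rw [Finset.mul_sum]
    exact Finset.sum_congr rfl fun k _ => by rw [Pi.neg_apply]; ring
  rw [mem_ofPred_eq]
  linarith [hBr p hp _ hneg]

variable {ι : Type*} [Fintype ι]
variable {F : Type*} [NormedAddCommGroup F] [InnerProductSpace ℝ F]

lemma norm_equivFun_symm_sq (b : OrthonormalBasis ι ℝ F) (c : ι → ℝ) :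
    ‖b.toBasis.equivFun.symm c‖ ^ 2 = ∑ k, c k ^ 2 := by
  rw [Module.Basis.equivFun_symm_apply, b.coe_toBasis, ← real_inner_self_eq_norm_sq,
    b.orthonormal.inner_sum]
  exact Finset.sum_congr rfl fun k _ => by rw [conj_trivial, sq]

variable [FiniteDimensional ℝ F] [MeasurableSpace F] [BorelSpace F]

lemma volume_preimage_equivFun_symm (b : OrthonormalBasis ι ℝ F) (s : Set F) :
    volume (b.toBasis.equivFun.symm ⁻¹' s) = volume s := by
  let e : (ι → ℝ) ≃ᵐ F := (MeasurableEquiv.toLp 2 (ι → ℝ)).trans b.measurableEquiv.symm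
  have he : MeasurePreserving e :=
    b.measurePreserving_repr_symm.comp (PiLp.volume_preserving_toLp ι)
  have hcoe : ⇑b.toBasis.equivFun.symm = e := by
    rw [b.coe_toBasis_repr]
    rfl
  rw [hcoe, he.measure_preimage_equiv]

/-- The **isodiametric inequality**. -/
theorem volume_le_volume_closedBall_of_dist_le {A : Set F} {r : ℝ}
    (h : ∀ x ∈ A, ∀ y ∈ A, dist x y ≤ 2 * r) (z : F) :
    volume A ≤ volume (Metric.closedBall z r) := by
  rcases A.eq_empty_or_nonempty with rfl | ⟨x₀, hx₀⟩
  · rw [measure_empty]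
    exact zero_le
  have hr : 0 ≤ r := by linarith [h x₀ hx₀ x₀ hx₀, dist_self x₀]
  have hclosure : closure A ×ˢ closure A ⊆ {p | dist p.1 p.2 ≤ 2 * r} := by
    rw [← closure_prod_eq]
    exact closure_minimal (fun p hp => h p.1 hp.1 p.2 hp.2)
      (isClosed_le continuous_dist continuous_const)
  set b := stdOrthonormalBasis ℝ F
  have hmeas : MeasurableSet (b.toBasis.equivFun.symm ⁻¹' closure A) :=
    isClosed_closure.measurableSet.preimage
      b.toBasis.equivFun.symm.toLinearMap.continuous_of_finiteDimensional.measurable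
  calc volume A ≤ volume (closure A) := measure_mono subset_closure
    _ = volume (b.toBasis.equivFun.symm ⁻¹' closure A) :=
      (volume_preimage_equivFun_symm b _).symm
    _ ≤ volume {c : Fin (Module.finrank ℝ F) → ℝ | ∑ k, c k ^ 2 ≤ r ^ 2} := by
      refine volume_le_volume_setOf_sum_sq_le hmeas fun c hc d hd => ?_
      have hcd := hclosure (mk_mem_prod hc hd)
      rw [mem_ofPred_eq, dist_eq_norm, ← map_sub] at hcd
      exact (norm_equivFun_symm_sq b (c - d)).ge.trans (pow_le_pow_left₀ (norm_nonneg _) hcd 2)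
    _ = volume (b.toBasis.equivFun.symm ⁻¹' Metric.closedBall 0 r) := by
      congr 1 with c
      rw [mem_ofPred_eq, mem_preimage, mem_closedBall_zero_iff, ← norm_equivFun_symm_sq b,
        sq_le_sq₀ (norm_nonneg _) hr]
    _ = volume (Metric.closedBall z r) := by
      rw [volume_preimage_equivFun_symm, Measure.addHaar_closedBall_center volume z]

lemma volume_le_card_mul_of_subset_iUnion {J : Type*} [Fintype J] {S : Set F} {A : J → Set F}
    {r : ℝ} (hS : S ⊆ ⋃ j, A j) (hA : ∀ j, ∀ x ∈ A j, ∀ y ∈ A j, dist x y ≤ 2 * r) (z : F) :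
    volume S ≤ Fintype.card J * volume (Metric.closedBall z r) :=
  calc volume S ≤ ∑ j, volume (A j) := (measure_mono hS).trans (measure_iUnion_fintype_le _ _)
    _ ≤ ∑ _j : J, volume (Metric.closedBall z r) :=
      Finset.sum_le_sum fun j _ => volume_le_volume_closedBall_of_dist_le (hA j) z
    _ = Fintype.card J * volume (Metric.closedBall z r) := by
      rw [Finset.sum_const, Finset.card_univ, nsmul_eq_mul]

lemma unitBallVol_nonneg (n : ℕ) : 0 ≤ unitBallVol n := by
  unfold unitBallVol
  positivity

lemma volume_closedBall_eq_unitBallVol [Nontrivial F] (z : F) {r : ℝ} (hr : 0 ≤ r) :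
    volume (Metric.closedBall z r) =
      ENNReal.ofReal (unitBallVol (Module.finrank ℝ F) * r ^ Module.finrank ℝ F) := by
  rw [InnerProductSpace.volume_closedBall, ENNReal.ofReal_mul (unitBallVol_nonneg _),
    ENNReal.ofReal_pow hr, mul_comm, unitBallVol, Real.sqrt_eq_rpow,
    ← Real.rpow_mul_natCast Real.pi_nonneg, one_div_mul_eq_div]

end Isodiametric

section GramSchmidt

open InnerProductSpace

variable {F : Type*} [NormedAddCommGroup F] [InnerProductSpace ℝ F]
variable {ι : Type*} [LinearOrder ι] [LocallyFiniteOrderBot ι] [WellFoundedLT ι]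

lemma sub_gramSchmidt_mem_span (w : ι → F) (k : ι) :
    w k - gramSchmidt ℝ w k ∈ Submodule.span ℝ (w '' Iio k) := by
  rw [gramSchmidt_def, sub_sub_cancel, ← span_gramSchmidt_Iio]
  refine Submodule.sum_mem _ fun i hi => ?_
  rw [Submodule.starProjection_singleton]
  exact Submodule.smul_mem _ _ (Submodule.subset_span ⟨i, Finset.mem_Iio.1 hi, rfl⟩)

lemma infDist_span_image_le_opNorm_mul_norm_gramSchmidt {Y : Type*} [SeminormedAddCommGroup Y]
    [NormedSpace ℝ Y] (S : F →L[ℝ] Y) (w : ι → F) (k : ι) :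
    Metric.infDist (S (w k)) (Submodule.span ℝ (S ∘ w '' Iio k) : Set Y) ≤
      ‖S‖ * ‖gramSchmidt ℝ w k‖ := by
  have hmem : S (w k - gramSchmidt ℝ w k) ∈ Submodule.span ℝ (S ∘ w '' Iio k) := by
    have h := Submodule.mem_map_of_mem (f := (S : F →ₗ[ℝ] Y)) (sub_gramSchmidt_mem_span w k)
    rwa [Submodule.map_span, ContinuousLinearMap.coe_coe, ← image_comp] at h
  calc Metric.infDist (S (w k)) (Submodule.span ℝ (S ∘ w '' Iio k) : Set Y)
      ≤ dist (S (w k)) (S (w k - gramSchmidt ℝ w k)) := Metric.infDist_le_dist_of_mem hmem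
    _ = ‖S (gramSchmidt ℝ w k)‖ := by rw [dist_eq_norm, ← map_sub, sub_sub_cancel]
    _ ≤ ‖S‖ * ‖gramSchmidt ℝ w k‖ := S.le_opNorm _

lemma inner_gramSchmidt_self (w : ι → F) (k : ι) :
    ⟪gramSchmidt ℝ w k, w k⟫ = ‖gramSchmidt ℝ w k‖ ^ 2 := by
  conv_lhs => rw [gramSchmidt_def'' ℝ w k]
  rw [inner_add_right, real_inner_self_eq_norm_sq, inner_sum, Finset.sum_eq_zero, add_zero]
  intro i hi
  rw [inner_smul_right, gramSchmidt_orthogonal ℝ w (Finset.mem_Iio.1 hi).ne', mul_zero]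

variable [Fintype ι] [FiniteDimensional ℝ F] (h : Module.finrank ℝ F = Fintype.card ι)

lemma inner_gramSchmidtOrthonormalBasis_self (w : ι → F) (k : ι) :
    ⟪gramSchmidtOrthonormalBasis h w k, w k⟫ = ‖gramSchmidt ℝ w k‖ := by
  by_cases hk : gramSchmidt ℝ w k = 0
  · rw [inner_gramSchmidtOrthonormalBasis_eq_zero h (by rw [gramSchmidtNormed, hk, smul_zero]), hk,
      norm_zero]
  · have hk' : ‖gramSchmidt ℝ w k‖ ≠ 0 := norm_ne_zero_iff.2 hk
    rw [gramSchmidtOrthonormalBasis_apply h (by simp [gramSchmidtNormed, hk]), gramSchmidtNormed,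
      inner_smul_left, inner_gramSchmidt_self]
    simp only [RCLike.ofReal_real_eq_id, id, map_inv₀, conj_trivial]
    field_simp

lemma det_gramSchmidtOrthonormalBasis (w : ι → F) :
    (gramSchmidtOrthonormalBasis h w).toBasis.det w = ∏ k, ‖gramSchmidt ℝ w k‖ := by
  rw [gramSchmidtOrthonormalBasis_det]
  exact Finset.prod_congr rfl fun k _ => inner_gramSchmidtOrthonormalBasis_self h w k

end GramSchmidt

section CrossPolytope

open InnerProductSpace

variable {ι : Type*} [Fintype ι]

/-- The absolutely convex hull of a finite family `w`, as the image of the unit ball of `ℓ¹`; it is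
a cross-polytope in the strict sense when `w` is linearly independent. -/
def crossPolytope {E : Type*} [AddCommGroup E] [Module ℝ E] (w : ι → E) : Set E :=
  Fintype.linearCombination ℝ w '' {c | ∑ i, |c i| ≤ 1}

lemma image_crossPolytope {E E' : Type*} [AddCommGroup E] [Module ℝ E] [AddCommGroup E']
    [Module ℝ E'] (f : E →ₗ[ℝ] E') (w : ι → E) :
    f '' crossPolytope w = crossPolytope (f ∘ w) := by
  rw [crossPolytope, crossPolytope, image_image]
  refine image_congr fun c _ => ?_
  simp only [Fintype.linearCombination_apply, map_sum, map_smul, comp_apply]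

lemma crossPolytope_subset_symConvexHull {X : Type*} [NormedAddCommGroup X] [NormedSpace ℝ X]
    {K : Set X} {n : ℕ} {v : Fin n → X} (hv : ∀ k, v k ∈ K) :
    crossPolytope v ⊆ symConvexHull K := by
  rintro _ ⟨c, hc, rfl⟩
  exact subset_closure ⟨n, c, v, hv, hc, rfl⟩

lemma volume_setOf_sum_abs_le_one [Nonempty ι] :
    volume {c : ι → ℝ | ∑ i, |c i| ≤ 1} =
      ENNReal.ofReal (2 ^ Fintype.card ι / (Fintype.card ι).factorial) := by
  have h := volume_sum_rpow_le ι (p := 1) le_rfl 1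
  simpa [Real.Gamma_nat_eq_factorial, one_add_one_eq_two, Real.Gamma_two] using h

variable {F : Type*} [NormedAddCommGroup F] [InnerProductSpace ℝ F] [FiniteDimensional ℝ F]
variable [MeasurableSpace F] [BorelSpace F]

lemma volume_crossPolytope_orthonormalBasis [Nonempty ι] (b : OrthonormalBasis ι ℝ F) :
    volume (crossPolytope b) =
      ENNReal.ofReal (2 ^ Fintype.card ι / (Fintype.card ι).factorial) := by
  have hcoe : ⇑(Fintype.linearCombination ℝ b) = b.toBasis.equivFun.symm := by
    ext c
    rw [Fintype.linearCombination_apply, Module.Basis.equivFun_symm_apply, b.coe_toBasis]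
  rw [← volume_preimage_equivFun_symm b, crossPolytope, hcoe,
    preimage_image_eq _ (LinearEquiv.injective _), volume_setOf_sum_abs_le_one]

lemma volume_crossPolytope [LinearOrder ι] [LocallyFiniteOrderBot ι] [Nonempty ι]
    (h : Module.finrank ℝ F = Fintype.card ι) (w : ι → F) :
    volume (crossPolytope w) = ENNReal.ofReal
      ((∏ k, ‖gramSchmidt ℝ w k‖) * (2 ^ Fintype.card ι / (Fintype.card ι).factorial)) := by
  set b := gramSchmidtOrthonormalBasis h w
  set f : F →ₗ[ℝ] F := b.toBasis.constr ℕ w with hf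
  have hfb : f ∘ b = w := by
    ext k
    rw [comp_apply, hf, ← b.coe_toBasis, Module.Basis.constr_basis]
  have hdet : LinearMap.det f = ∏ k, ‖gramSchmidt ℝ w k‖ := by
    rw [← det_gramSchmidtOrthonormalBasis h w, Module.Basis.det_apply,
      Module.Basis.toMatrix_eq_toMatrix_constr, LinearMap.det_toMatrix]
  have hprod : 0 ≤ ∏ k, ‖gramSchmidt ℝ w k‖ := Finset.prod_nonneg fun _ _ => norm_nonneg _
  calc volume (crossPolytope w) = volume (f '' crossPolytope b) := by
        rw [image_crossPolytope, hfb]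
    _ = ENNReal.ofReal ((∏ k, ‖gramSchmidt ℝ w k‖) *
        (2 ^ Fintype.card ι / (Fintype.card ι).factorial)) := by
      rw [Measure.addHaar_image_linearMap, hdet, abs_of_nonneg hprod,
        volume_crossPolytope_orthonormalBasis, ENNReal.ofReal_mul hprod]

lemma prod_norm_gramSchmidt_le_of_crossPolytope_subset [LinearOrder ι] [LocallyFiniteOrderBot ι]
    [Nonempty ι] (h : Module.finrank ℝ F = Fintype.card ι) (w : ι → F) {J : Type*} [Fintype J]
    {A : J → Set F} {r : ℝ} (hr : 0 ≤ r) (hw : crossPolytope w ⊆ ⋃ j, A j)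
    (hA : ∀ j, ∀ x ∈ A j, ∀ y ∈ A j, dist x y ≤ 2 * r) :
    (∏ k, ‖gramSchmidt ℝ w k‖) * (2 ^ Fintype.card ι / (Fintype.card ι).factorial) ≤
      Fintype.card J * (unitBallVol (Fintype.card ι) * r ^ Fintype.card ι) := by
  have : Nontrivial F := Module.nontrivial_of_finrank_pos (R := ℝ) (h ▸ Fintype.card_pos)
  have hV := unitBallVol_nonneg (Fintype.card ι)
  have hvol := volume_le_card_mul_of_subset_iUnion hw hA 0
  rwa [volume_crossPolytope h, volume_closedBall_eq_unitBallVol 0 hr, h,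
    ← ENNReal.ofReal_natCast, ← ENNReal.ofReal_mul (Nat.cast_nonneg _),
    ENNReal.ofReal_le_ofReal_iff (by positivity)] at hvol

lemma prod_infDist_span_le_of_crossPolytope_subset [LinearOrder ι] [LocallyFiniteOrderBot ι]
    [Nonempty ι] (h : Module.finrank ℝ F = Fintype.card ι) {Y : Type*} [NormedAddCommGroup Y]
    [NormedSpace ℝ Y] (T : Y ≃L[ℝ] F) (u : ι → Y) {J : Type*} [Fintype J] {A : J → Set Y} {ε : ℝ}
    (hε : 0 ≤ ε) (hu : crossPolytope u ⊆ ⋃ j, A j)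
    (hA : ∀ j, ∀ x ∈ A j, ∀ y ∈ A j, dist x y ≤ 2 * ε) :
    (∏ k, Metric.infDist (u k) (Submodule.span ℝ (u '' Iio k) : Set Y)) *
        (2 ^ Fintype.card ι / (Fintype.card ι).factorial) ≤
      Fintype.card J * (unitBallVol (Fintype.card ι) *
        (‖(T : Y →L[ℝ] F)‖ * ‖(T.symm : F →L[ℝ] Y)‖ * ε) ^ Fintype.card ι) := by
  set C := ‖(T : Y →L[ℝ] F)‖
  set C' := ‖(T.symm : F →L[ℝ] Y)‖
  have hinfDist : ∀ k, Metric.infDist (u k) (Submodule.span ℝ (u '' Iio k) : Set Y) ≤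
      C' * ‖gramSchmidt ℝ (T ∘ u) k‖ := fun k => by
    simpa [← comp_assoc] using infDist_span_image_le_opNorm_mul_norm_gramSchmidt
      (T.symm : F →L[ℝ] Y) (T ∘ u) k
  have hcover : crossPolytope (T ∘ u) ⊆ ⋃ j, T '' A j := by
    rw [← image_iUnion]
    exact (image_crossPolytope (T : Y →ₗ[ℝ] F) u).ge.trans (image_mono hu)
  have hdist : ∀ j, ∀ x ∈ T '' A j, ∀ y ∈ T '' A j, dist x y ≤ 2 * (C * ε) := by
    rintro j _ ⟨x, hx, rfl⟩ _ ⟨y, hy, rfl⟩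
    calc dist (T x) (T y) ≤ C * dist x y := (T : Y →L[ℝ] F).dist_le_opNorm x y
      _ ≤ C * (2 * ε) := by gcongr; exact hA j x hx y hy
      _ = 2 * (C * ε) := mul_left_comm _ _ _
  have hprod := prod_norm_gramSchmidt_le_of_crossPolytope_subset h (T ∘ u)
    (by positivity : 0 ≤ C * ε) hcover hdist
  calc (∏ k, Metric.infDist (u k) (Submodule.span ℝ (u '' Iio k) : Set Y)) *
        (2 ^ Fintype.card ι / (Fintype.card ι).factorial)
      ≤ (∏ k, C' * ‖gramSchmidt ℝ (T ∘ u) k‖) *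
        (2 ^ Fintype.card ι / (Fintype.card ι).factorial) := by
        gcongr with k
        · exact fun _ _ => Metric.infDist_nonneg
        · exact hinfDist k
    _ = C' ^ Fintype.card ι * ((∏ k, ‖gramSchmidt ℝ (T ∘ u) k‖) *
        (2 ^ Fintype.card ι / (Fintype.card ι).factorial)) := by
        rw [Finset.prod_mul_distrib, Finset.prod_const, Finset.card_univ, mul_assoc]
    _ ≤ C' ^ Fintype.card ι * (Fintype.card J *
        (unitBallVol (Fintype.card ι) * (C * ε) ^ Fintype.card ι)) := by gcongr
    _ = Fintype.card J * (unitBallVol (Fintype.card ι) * (C * C' * ε) ^ Fintype.card ι) := by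
        ring

end CrossPolytope

section Entropy

variable {X : Type*} [NormedAddCommGroup X]

lemma le_mul_entropyNumber {K : Set X} (hK : Bornology.IsBounded K) {n : ℕ} {a C : ℝ} (hC : 0 ≤ C)
    (h : ∀ ε > 0, ∀ c : Fin (2 ^ n) → X, K ⊆ ⋃ i, Metric.closedBall (c i) ε → a ≤ C * ε) :
    a ≤ C * entropyNumber n K := by
  obtain ⟨R, hR, hKR⟩ := hK.subset_closedBall_lt 0 0
  have hne : {ε : ℝ | 0 < ε ∧ ∃ c : Fin (2 ^ n) → X,
      K ⊆ ⋃ i, Metric.closedBall (c i) ε}.Nonempty :=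
    ⟨R, hR, fun _ => 0, hKR.trans (subset_iUnion (fun _ => Metric.closedBall (0 : X) R) 0)⟩
  rw [entropyNumber, ← smul_eq_mul, ← Real.sInf_smul_of_nonneg hC]
  refine le_csInf hne.smul_set ?_
  rintro _ ⟨ε, ⟨hε, c, hc⟩, rfl⟩
  exact h ε hε c hc

variable [NormedSpace ℝ X]

lemma isBounded_symConvexHull {K : Set X} (hK : Bornology.IsBounded K) :
    Bornology.IsBounded (symConvexHull K) := by
  obtain ⟨R, hR, hKR⟩ := hK.exists_pos_norm_le
  refine (Metric.isBounded_closedBall (x := (0 : X)) (r := R)).subset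
    (closure_minimal ?_ Metric.isClosed_closedBall)
  rintro _ ⟨m, c, g, hg, hc, rfl⟩
  rw [mem_closedBall_zero_iff]
  calc ‖∑ i, c i • g i‖ ≤ ∑ i, |c i| * R := norm_sum_le_of_le _ fun i _ => by
        rw [norm_smul, Real.norm_eq_abs]
        exact mul_le_mul_of_nonneg_left (hKR _ (hg i)) (abs_nonneg _)
    _ = (∑ i, |c i|) * R := (Finset.sum_mul _ _ _).symm
    _ ≤ R := mul_le_of_le_one_left hR.le hc

lemma infDist_coe_span_image {Y : Submodule ℝ X} {ι : Type*} (u : ι → Y) (s : Set ι) (y : Y) :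
    Metric.infDist (y : X) (Submodule.span ℝ ((fun i => (u i : X)) '' s) : Set X) =
      Metric.infDist y (Submodule.span ℝ (u '' s) : Set Y) := by
  have hspan : (Submodule.span ℝ ((fun i => (u i : X)) '' s) : Set X) =
      Y.subtypeₗᵢ '' (Submodule.span ℝ (u '' s) : Set Y) := by
    have hmap := Submodule.map_span Y.subtype (u '' s)
    rw [image_image] at hmap
    exact congrArg SetLike.coe hmap.symm
  rw [hspan]
  exact Metric.infDist_image Y.subtypeₗᵢ.isometry

lemma rpow_inv_natCast_le_of_le_mul_pow {P a b : ℝ} {n : ℕ} (hn : n ≠ 0) (hP : 0 ≤ P) (ha : 0 ≤ a)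
    (hb : 0 ≤ b) (h : P ≤ a * b ^ n) : P ^ (n : ℝ)⁻¹ ≤ a ^ (n : ℝ)⁻¹ * b :=
  calc P ^ (n : ℝ)⁻¹ ≤ (a * b ^ n) ^ (n : ℝ)⁻¹ := Real.rpow_le_rpow hP h (by positivity)
    _ = a ^ (n : ℝ)⁻¹ * b := by
      rw [Real.mul_rpow ha (pow_nonneg hb n), Real.pow_rpow_inv_natCast hb hn]

theorem prod_infDist_span_le_of_symConvexHull_subset {K : Set X} {n : ℕ} (hn : n ≠ 0)
    {v : Fin n → X} (hv : ∀ k, v k ∈ K)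
    (T : Submodule.span ℝ (range v) ≃L[ℝ] EuclideanSpace ℝ (Fin n)) {ε : ℝ} (hε : 0 ≤ ε)
    {c : Fin (2 ^ n) → X} (hc : symConvexHull K ⊆ ⋃ i, Metric.closedBall (c i) ε) :
    ∏ k, Metric.infDist (v k) (Submodule.span ℝ (v '' {j | j < k}) : Set X) ≤
      n.factorial * unitBallVol n *
        (‖(T : Submodule.span ℝ (range v) →L[ℝ] EuclideanSpace ℝ (Fin n))‖ *
          ‖(T.symm : EuclideanSpace ℝ (Fin n) →L[ℝ] Submodule.span ℝ (range v))‖ * ε) ^ n := by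
  have : Nonempty (Fin n) := ⟨⟨0, Nat.pos_of_ne_zero hn⟩⟩
  let u : Fin n → Submodule.span ℝ (range v) := fun k => ⟨v k, Submodule.subset_span ⟨k, rfl⟩⟩
  have hcover : crossPolytope u ⊆ ⋃ j, Subtype.val ⁻¹' Metric.closedBall (c j) ε := by
    rw [← preimage_iUnion, ← image_subset_iff]
    exact (image_crossPolytope (Submodule.subtype _) u).le.trans
      ((crossPolytope_subset_symConvexHull hv).trans hc)
  have hprod := prod_infDist_span_le_of_crossPolytope_subset finrank_euclideanSpace T u hε hcover
    fun j x hx y hy => by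
      have := dist_triangle_right (x : X) y (c j)
      rw [mem_preimage, Metric.mem_closedBall] at hx hy
      rw [Subtype.dist_eq]
      linarith
  simp only [← infDist_coe_span_image, Fintype.card_fin] at hprod
  change (∏ k, Metric.infDist (v k) (Submodule.span ℝ (v '' {j | j < k}) : Set X)) * _ ≤ _ at hprod
  rw [mul_div_assoc', div_le_iff₀ (by positivity)] at hprod
  push_cast at hprod
  refine le_of_mul_le_mul_right (hprod.trans_eq ?_) (by positivity : (0 : ℝ) < 2 ^ n)
  ring

end Entropy

theorem geometric_mean_dist_le_entropy_banach_general
    {X : Type*} [NormedAddCommGroup X] [NormedSpace ℝ X]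
    (K : Set X) (hK : Bornology.IsBounded K) (n : ℕ) (hn : 1 ≤ n)
    (v : Fin n → X) (hv : ∀ k, v k ∈ K)
    (T : Submodule.span ℝ (range v) ≃L[ℝ] EuclideanSpace ℝ (Fin n)) :
    (∏ k, Metric.infDist (v k) (Submodule.span ℝ (v '' {j | j < k}) : Set X)) ^ (n : ℝ)⁻¹ ≤
      ‖(T : Submodule.span ℝ (range v) →L[ℝ] EuclideanSpace ℝ (Fin n))‖ *
        ‖(T.symm : EuclideanSpace ℝ (Fin n) →L[ℝ] Submodule.span ℝ (range v))‖ *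
          ((n.factorial * unitBallVol n) ^ (n : ℝ)⁻¹ * entropyNumber n (symConvexHull K)) := by
  have hn0 : n ≠ 0 := Nat.one_le_iff_ne_zero.1 hn
  have hV := unitBallVol_nonneg n
  rw [← mul_assoc]
  refine le_mul_entropyNumber (isBounded_symConvexHull hK) (by positivity) fun ε hε c hc => ?_
  refine (rpow_inv_natCast_le_of_le_mul_pow hn0
    (Finset.prod_nonneg fun _ _ => Metric.infDist_nonneg) (by positivity) (by positivity)
    (prod_infDist_span_le_of_symConvexHull_subset hn0 hv T hε.le hc)).trans_eq ?_
  ring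

/-- Banach-space version of the key lemma (Lemma 3.1 of the paper). -/
theorem geometric_mean_dist_le_entropy_banach
    {X : Type*} [NormedAddCommGroup X] [NormedSpace ℝ X] [CompleteSpace X]
    (K : Set X) (hK : IsCompact K) (n : ℕ) (hn : 1 ≤ n)
    (v : Fin n → X) (hv : ∀ k, v k ∈ K) (hind : LinearIndependent ℝ v)
    (T : (Submodule.span ℝ (Set.range v)) ≃L[ℝ] EuclideanSpace ℝ (Fin n)) :
    (∏ k : Fin n, Metric.infDist (v k) ((Submodule.span ℝ (v '' {j | j < k}) : Submodule ℝ X) : Set X))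
        ^ ((n : ℝ)⁻¹)
      ≤ ‖(T : (Submodule.span ℝ (Set.range v)) →L[ℝ] EuclideanSpace ℝ (Fin n))‖ *
          ‖(T.symm : EuclideanSpace ℝ (Fin n) →L[ℝ] (Submodule.span ℝ (Set.range v)))‖ *
          (((n.factorial : ℝ) * unitBallVol n) ^ ((n : ℝ)⁻¹) *
            entropyNumber n (symConvexHull K)) :=
  geometric_mean_dist_le_entropy_banach_general K hK.isBounded n hn v hv T
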